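/- Let n ≥ 1 and let α_t, α_x : ℝ × ℝ → Matrix (Fin n) (Fin n) ℝ be smooth (C^∞) matrix-valued functions satisfying the flatness (zero-curvature) equation ∂_t α_x − ∂_x α_t + [α_t, α_x] = 0 everywhere, where [a, b] = a b − b a. Then for every matrix c there exists a unique smooth function f : ℝ × ℝ → Matrix (Fin n) (Fin n) ℝ with f(0,0) = c satisfying the covariant-constancy equations ∂_t f + [α_t, f] = 0 and ∂_x f + [α_x, f] = 0 everywhere. -/

import Mathlib

open Set Filter Topology

namespace FlatConn

/-- Global existence for linear ODEs on `[0,1]`. -/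
theorem linear_ode {E : Type*} [NormedAddCommGroup E] [NormedSpace ℝ E] [CompleteSpace E]
    (a : ℝ → E →L[ℝ] E) (ha : Continuous a) (c : E) :
    ∃ h : ℝ → E, h 0 = c ∧ Continuous h ∧ ∀ s ∈ Icc (0:ℝ) 1, HasDerivAt h (a s (h s)) s := by
  obtain ⟨K0, hK0⟩ := (isCompact_Icc (a := (0:ℝ)) (b := 1)).exists_bound_of_continuousOn
    ha.continuousOn
  set K : ℝ := max K0 1 with hKdef
  have hK1 : 1 ≤ K := le_max_right _ _
  have hK : ∀ s ∈ Icc (0:ℝ) 1, ‖a s‖ ≤ K := fun s hs => (hK0 s hs).trans (le_max_left _ _)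
  let l : ℝ := 2 * K
  have hl : 0 < l := by positivity
  let pr : ℝ → Icc (0:ℝ) 1 := projIcc (0:ℝ) 1 zero_le_one
  have hpr : Continuous pr := continuous_projIcc
  let w : C(Icc (0:ℝ) 1, E) → ℝ → E := fun g τ => Real.exp (l * τ) • a τ (g (pr τ))
  have hw : ∀ g, Continuous (w g) := fun g => by
    have : Continuous fun τ => g (pr τ) := g.continuous.comp hpr
    exact (by fun_prop : Continuous fun τ => Real.exp (l * τ)).smul (ha.clm_apply this)
  let H : C(Icc (0:ℝ) 1, E) → ℝ → E := fun g t => c + ∫ τ in (0:ℝ)..t, w g τ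
  have hHd : ∀ g t, HasDerivAt (H g) (w g t) t := fun g t =>
    ((hw g).integral_hasStrictDerivAt 0 t).hasDerivAt.const_add c
  have hHc : ∀ g, Continuous (H g) := fun g =>
    continuous_iff_continuousAt.2 fun t => (hHd g t).continuousAt
  let T : C(Icc (0:ℝ) 1, E) → C(Icc (0:ℝ) 1, E) := fun g =>
    ⟨fun t => Real.exp (-(l * (t:ℝ))) • H g t, by
      have := (hHc g).comp (continuous_subtype_val (p := fun x => x ∈ Icc (0:ℝ) 1))
      exact (by fun_prop : Continuous fun t : Icc (0:ℝ) 1 => Real.exp (-(l * (t:ℝ)))).smul this⟩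
  have hT : ContractingWith (1/2) T := by
    refine ⟨by rw [← NNReal.coe_lt_coe]; norm_num, LipschitzWith.of_dist_le_mul fun g₁ g₂ => ?_⟩
    rw [ContinuousMap.dist_le (by positivity)]
    intro t
    have ht0 : (0:ℝ) ≤ t := t.2.1
    have hint : ∀ g, IntervalIntegrable (w g) MeasureTheory.volume 0 (t:ℝ) :=
      fun g => (hw g).intervalIntegrable _ _
    have hle : ‖∫ τ in (0:ℝ)..t, (w g₁ τ - w g₂ τ)‖ ≤
        ∫ τ in (0:ℝ)..t, Real.exp (l * τ) * (K * dist g₁ g₂) := by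
      refine intervalIntegral.norm_integral_le_of_norm_le ht0 (Eventually.of_forall ?_)
        (Continuous.intervalIntegrable (by fun_prop) _ _)
      intro τ hτ
      have hτ' : τ ∈ Icc (0:ℝ) 1 := ⟨hτ.1.le, hτ.2.trans t.2.2⟩
      simp only [w, ← smul_sub, ← map_sub]
      rw [norm_smul, Real.norm_of_nonneg (Real.exp_pos _).le]
      gcongr
      refine ((a τ).le_opNorm _).trans ?_
      gcongr
      · exact hK τ hτ'
      · rw [← dist_eq_norm]; exact ContinuousMap.dist_apply_le_dist _
    have hval : ∫ τ in (0:ℝ)..t, Real.exp (l * τ) * (K * dist g₁ g₂) =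
        (Real.exp (l * t) - 1) / l * (K * dist g₁ g₂) := by
      rw [intervalIntegral.integral_mul_const]
      congr 1
      rw [intervalIntegral.integral_comp_mul_left (fun x => Real.exp x) hl.ne']
      simp [div_eq_inv_mul]
    have : dist (T g₁ t) (T g₂ t) =
        Real.exp (-(l * (t:ℝ))) * ‖∫ τ in (0:ℝ)..t, (w g₁ τ - w g₂ τ)‖ := by
      rw [dist_eq_norm, intervalIntegral.integral_sub (hint _) (hint _)]
      simp only [T, H, ContinuousMap.coe_mk, ← smul_sub]
      rw [norm_smul, Real.norm_of_nonneg (Real.exp_pos _).le]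
      congr 2
      abel
    rw [this]
    have hd : 0 ≤ dist g₁ g₂ := dist_nonneg
    calc _ ≤ Real.exp (-(l * (t:ℝ))) * ((Real.exp (l * t) - 1) / l * (K * dist g₁ g₂)) := by
          rw [← hval]; gcongr
      _ = (1 - Real.exp (-(l * (t:ℝ)))) * (1 / 2 * dist g₁ g₂) := by
          have : Real.exp (-(l * (t:ℝ))) * Real.exp (l * t) = 1 := by
            rw [← Real.exp_add]; simp
          have hKl : K / l = 1 / 2 := by simp only [l]; field_simp
          calc _ = (Real.exp (-(l * (t:ℝ))) * Real.exp (l * t) - Real.exp (-(l * (t:ℝ))))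
                * (K / l * dist g₁ g₂) := by ring
            _ = _ := by rw [this, hKl]
      _ ≤ 1 * (1 / 2 * dist g₁ g₂) := by
          gcongr
          linarith [Real.exp_pos (-(l * (t:ℝ)))]
      _ = _ := by simp
  have : Nonempty C(Icc (0:ℝ) 1, E) := ⟨0⟩
  let g := ContractingWith.fixedPoint T hT
  have hg : T g = g := hT.fixedPoint_isFixedPt
  refine ⟨H g, by simp [H], hHc g, fun s hs => ?_⟩
  have h1 : g (pr s) = Real.exp (-(l * s)) • H g s := by
    conv_lhs => rw [← hg]
    simp only [T, ContinuousMap.coe_mk, pr, projIcc_of_mem zero_le_one hs]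
  have h2 : w g s = a s (H g s) := by
    simp only [w, h1, map_smul, smul_smul]
    rw [← Real.exp_add]; simp
  rw [← h2]
  exact hHd g s

theorem linear_ode_unique {E : Type*} [NormedAddCommGroup E] [NormedSpace ℝ E]
    (a : ℝ → E →L[ℝ] E) (ha : Continuous a) (u v : ℝ → E) (h0 : u 0 = v 0)
    (hu : ∀ s ∈ Icc (0:ℝ) 1, HasDerivAt u (a s (u s)) s)
    (hv : ∀ s ∈ Icc (0:ℝ) 1, HasDerivAt v (a s (v s)) s) : u 1 = v 1 := by
  obtain ⟨K, hK⟩ := (isCompact_Icc (a := (0:ℝ)) (b := 1)).exists_bound_of_continuousOn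
    ha.continuousOn
  have hd : ∀ s ∈ Icc (0:ℝ) 1, HasDerivAt (fun s => u s - v s) (a s (u s - v s)) s :=
    fun s hs => by rw [map_sub]; exact (hu s hs).sub (hv s hs)
  have := eq_zero_of_abs_deriv_le_mul_abs_self_of_eq_zero_right (f := fun s => u s - v s)
    (f' := fun s => a s (u s - v s)) (K := K) (a := 0) (b := 1)
    (fun s hs => (hd s hs).continuousAt.continuousWithinAt)
    (fun s hs => (hd s (Ico_subset_Icc_self hs)).hasDerivWithinAt) (by simp [h0])
    (fun s hs => ((a s).le_opNorm _).trans (by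
      gcongr; exact hK s (Ico_subset_Icc_self hs))) 1 (by simp)
  exact sub_eq_zero.1 this

set_option maxHeartbeats 1000000 in
/-- Uniform first order expansion. -/
theorem unif_expansion {V F : Type*} [NormedAddCommGroup V] [NormedSpace ℝ V]
    [NormedAddCommGroup F] [NormedSpace ℝ F] (a : ℝ → V → F) (a' : ℝ → V → V →L[ℝ] F)
    (hd : ∀ s q, HasFDerivAt (a s) (a' s q) q) (hc : Continuous fun x : ℝ × V => a' x.1 x.2)
    (ε : ℝ) (hε : 0 < ε) :
    ∃ δ > 0, ∀ s ∈ Icc (0:ℝ) 1, ∀ q : V, ‖q‖ < δ →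
      ‖a s q - a s 0 - a' s 0 q‖ ≤ ε * ‖q‖ := by
  have hopen : IsOpen {x : ℝ × V | ‖a' x.1 x.2 - a' x.1 0‖ < ε} := by
    refine isOpen_lt ?_ continuous_const
    have : Continuous fun x : ℝ × V => a' x.1 0 :=
      hc.comp (continuous_fst.prodMk continuous_const)
    exact (hc.sub this).norm
  obtain ⟨u, v, -, hvo, hsu, htv, huv⟩ := generalized_tube_lemma
    (isCompact_Icc (a := (0:ℝ)) (b := 1)) (isCompact_singleton (x := (0:V))) hopen (by
      rintro ⟨s, q⟩ ⟨-, hq⟩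
      simp only [mem_singleton_iff] at hq
      simp [hq, hε])
  obtain ⟨δ, hδ, hball⟩ := Metric.isOpen_iff.1 hvo 0 (htv rfl)
  refine ⟨δ, hδ, fun s hs q hq => ?_⟩
  have := (convex_ball (0:V) δ).norm_image_sub_le_of_norm_hasFDerivWithin_le' (f := a s)
    (f' := a' s) (φ := a' s 0) (C := ε) (x := 0) (y := q)
    (fun x _ => (hd s x).hasFDerivWithinAt)
    (fun x hx => le_of_lt (huv (show (s, x) ∈ u ×ˢ v from ⟨hsu hs, hball hx⟩)))
    (by simpa using hδ) (by simpa using hq)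
  simpa using this

theorem hasFDerivAt_radial {V E : Type*} [NormedAddCommGroup V] [NormedSpace ℝ V]
    [NormedAddCommGroup E] [NormedSpace ℝ E]
    (A : V → V →L[ℝ] E →L[ℝ] E) (hA : ContDiff ℝ (⊤ : ℕ∞) A)
    (hflat : ∀ p u v, fderiv ℝ A p u v - fderiv ℝ A p v u
      = (A p u).comp (A p v) - (A p v).comp (A p u))
    (c : E) (h : V → ℝ → E) (h0 : ∀ p, h p 0 = c) (hc : ∀ p, Continuous (h p))
    (hd : ∀ p, ∀ s ∈ Icc (0:ℝ) 1, HasDerivAt (h p) (A (s • p) p (h p s)) s) (p : V) :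
    HasFDerivAt (fun p => h p 1) ((A p).flip (h p 1)) p := by
  have hAd : Differentiable ℝ A := hA.differentiable (by simp)
  have hAc : Continuous A := hA.continuous
  have hA'c : Continuous (fderiv ℝ A) := hA.continuous_fderiv (by simp)
  let a : ℝ → V → E →L[ℝ] E := fun s q => A (s • (p + q)) (p + q)
  let a' : ℝ → V → V →L[ℝ] E →L[ℝ] E := fun s q =>
    A (s • (p + q)) + s • (fderiv ℝ A (s • (p + q))).flip (p + q)
  have had : ∀ s q, HasFDerivAt (a s) (a' s q) q := by
    intro s q
    have e1 : HasFDerivAt (fun q : V => p + q) (ContinuousLinearMap.id ℝ V) q :=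
      (hasFDerivAt_id q).const_add p
    have e2 : HasFDerivAt (fun q : V => s • (p + q)) (s • ContinuousLinearMap.id ℝ V) q :=
      e1.const_smul s
    have e3 : HasFDerivAt (fun q : V => A (s • (p + q)))
        ((fderiv ℝ A (s • (p + q))).comp (s • ContinuousLinearMap.id ℝ V)) q :=
      HasFDerivAt.comp (g := A) q (hAd (s • (p + q))).hasFDerivAt e2
    have e4 := e3.clm_apply e1
    refine e4.congr_fderiv ?_
    ext v x
    simp [a']
  have ha'c : Continuous fun x : ℝ × V => a' x.1 x.2 := by
    have e1 : Continuous fun x : ℝ × V => x.1 • (p + x.2) := by fun_prop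
    have e2 : Continuous fun x : ℝ × V => (fderiv ℝ A (x.1 • (p + x.2))).flip :=
      (ContinuousLinearMap.flipₗᵢ ℝ V V (E →L[ℝ] E)).continuous.comp (hA'c.comp e1)
    exact (hAc.comp e1).add (continuous_fst.smul (e2.clm_apply (by fun_prop)))
  have hray : Continuous fun s : ℝ => s • p := by fun_prop
  have hAray : Continuous fun s : ℝ => A (s • p) := hAc.comp hray
  have ha'0 : Continuous fun s => a' s 0 := ha'c.comp (continuous_id.prodMk continuous_const)
  obtain ⟨M1, hM1⟩ := (isCompact_Icc (a := (0:ℝ)) (b := 1)).exists_bound_of_continuousOn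
    (hc p).continuousOn
  obtain ⟨M2, hM2⟩ := (isCompact_Icc (a := (0:ℝ)) (b := 1)).exists_bound_of_continuousOn
    (E := V →L[ℝ] E →L[ℝ] E) (f := fun s => a' s 0) ha'0.continuousOn
  obtain ⟨M3, hM3⟩ := (isCompact_Icc (a := (0:ℝ)) (b := 1)).exists_bound_of_continuousOn
    (E := V →L[ℝ] E →L[ℝ] E) (f := fun s : ℝ => A (s • p)) hAray.continuousOn
  obtain ⟨M4, hM4⟩ := (isCompact_Icc (a := (0:ℝ)) (b := 1)).exists_bound_of_continuousOn
    (E := E →L[ℝ] E) (f := fun s : ℝ => A (s • p) p)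
    (hAray.clm_apply (continuous_const (y := p))).continuousOn
  obtain ⟨M, hM, l1, l2, l3, l4⟩ : ∃ M : ℝ, 1 ≤ M ∧ M1 ≤ M ∧ M2 ≤ M ∧ M3 ≤ M ∧ M4 ≤ M :=
    ⟨max 1 (max M1 (max M2 (max M3 M4))), by simp⟩
  let K : ℝ := 2 * M + 1
  have hKpos : 0 < K := by positivity
  rw [hasFDerivAt_iff_isLittleO_nhds_zero, Asymptotics.isLittleO_iff]
  intro η hη
  let X := Real.exp K
  have hX : 0 < X := Real.exp_pos _
  let ε : ℝ := min 1 (η / (4 * M ^ 2 * X))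
  have hε : 0 < ε := lt_min one_pos (by positivity)
  obtain ⟨δ, hδ, hexp⟩ := unif_expansion a a' had ha'c ε hε
  have hδ' : 0 < min δ (min 1 (η / (2 * M ^ 3 * X))) :=
    lt_min hδ (lt_min one_pos (by positivity))
  filter_upwards [Metric.ball_mem_nhds (0:V) hδ'] with q hq
  rw [mem_ball_zero_iff, lt_min_iff, lt_min_iff] at hq
  obtain ⟨hq1, hq2, hq3⟩ := hq
  -- the approximate solution
  let k : ℝ → E := fun s => s • A (s • p) q (h p s)
  have hkd : ∀ s ∈ Icc (0:ℝ) 1,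
      HasDerivAt k (a s 0 (k s) + a' s 0 q (h p s)) s := by
    intro s hs
    have e1 : HasDerivAt (fun s : ℝ => s • p) p s := by
      simpa using (hasDerivAt_id s).smul_const p
    have e2 : HasDerivAt (fun s : ℝ => A (s • p)) (fderiv ℝ A (s • p) p) s :=
      HasFDerivAt.comp_hasDerivAt (l := A) s (hAd (s • p)).hasFDerivAt e1
    have e3 : HasDerivAt (fun s : ℝ => A (s • p) q) (fderiv ℝ A (s • p) p q) s := by
      simpa using e2.clm_apply (hasDerivAt_const s q)
    have e4 := (hasDerivAt_id s).smul (e3.clm_apply (hd p s hs))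
    refine e4.congr_deriv ?_
    have := congrArg (fun L : E →L[ℝ] E => L (h p s)) (hflat (s • p) p q)
    simp only [sub_apply, ContinuousLinearMap.comp_apply] at this
    have this' := sub_eq_iff_eq_add.1 this
    simp only [a, a', k, add_zero, add_apply, smul_apply,
      ContinuousLinearMap.flip_apply, map_smul, this', id, one_smul]
    module
  let R : ℝ → E := fun s => (a s q - a s 0 - a' s 0 q) (h p s + k s) + a' s 0 q (k s)
  let D : ℝ → E := fun s => h (p + q) s - (h p s + k s)
  have hDd : ∀ s ∈ Icc (0:ℝ) 1, HasDerivAt D (a s q (D s) + R s) s := by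
    intro s hs
    refine ((hd (p + q) s hs).sub ((hd p s hs).add (hkd s hs))).congr_deriv ?_
    have z : a s 0 = A (s • p) p := by simp [a]
    have z' : A (s • (p + q)) (p + q) = a s q := rfl
    rw [← z, z']
    simp only [D, R, map_sub, map_add, sub_apply]
    abel
  have hkb : ∀ s ∈ Icc (0:ℝ) 1, ‖k s‖ ≤ M ^ 2 * ‖q‖ := by
    intro s hs
    have b1 : ‖A (s • p) q (h p s)‖ ≤ (M * ‖q‖) * M := by
      refine ((A (s • p) q).le_opNorm _).trans ?_
      have m3 := (hM3 s hs).trans l3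
      have m1 := (hM1 s hs).trans l1
      have m2 : ‖A (s • p) q‖ ≤ M * ‖q‖ := ((A (s • p)).le_opNorm q).trans (by gcongr)
      gcongr
    simp only [k]
    rw [norm_smul, Real.norm_of_nonneg hs.1]
    calc _ ≤ 1 * ((M * ‖q‖) * M) := by gcongr; exact hs.2
      _ = _ := by ring
  have ha'b : ∀ s ∈ Icc (0:ℝ) 1, ‖a' s 0 q‖ ≤ M * ‖q‖ := fun s hs =>
    ((a' s 0).le_opNorm q).trans (by gcongr; exact (hM2 s hs).trans l2)
  have hqn : 0 ≤ ‖q‖ := norm_nonneg q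
  have hRb : ∀ s ∈ Icc (0:ℝ) 1, ‖R s‖ ≤ (2 * M ^ 2 * ε + M ^ 3 * ‖q‖) * ‖q‖ := by
    intro s hs
    have b1 : ‖h p s + k s‖ ≤ 2 * M ^ 2 := by
      refine (norm_add_le _ _).trans ?_
      have := (hM1 s hs).trans l1
      have := hkb s hs
      nlinarith
    have b2 := hexp s hs q hq1
    calc ‖R s‖ ≤ ‖a s q - a s 0 - a' s 0 q‖ * ‖h p s + k s‖ + ‖a' s 0 q‖ * ‖k s‖ :=
          (norm_add_le _ _).trans (add_le_add (ContinuousLinearMap.le_opNorm _ _)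
            (ContinuousLinearMap.le_opNorm _ _))
      _ ≤ (ε * ‖q‖) * (2 * M ^ 2) + (M * ‖q‖) * (M ^ 2 * ‖q‖) := by
          gcongr
          · exact ha'b s hs
          · exact hkb s hs
      _ = _ := by ring
  have hab : ∀ s ∈ Icc (0:ℝ) 1, ‖a s q‖ ≤ K := by
    intro s hs
    have b2 := hexp s hs q hq1
    have b3 := ha'b s hs
    have b4 : ‖a s 0‖ ≤ M := by
      have := (hM4 s hs).trans l4
      simpa [a] using this
    have : a s q = (a s q - a s 0 - a' s 0 q) + a' s 0 q + a s 0 := by abel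
    rw [this]
    refine (norm_add₃_le).trans ?_
    have e1 : ε ≤ 1 := min_le_left _ _
    have : ε * ‖q‖ ≤ 1 := by nlinarith
    have : M * ‖q‖ ≤ M := by nlinarith
    simp only [K]
    linarith
  set ρ := (2 * M ^ 2 * ε + M ^ 3 * ‖q‖) * ‖q‖ with hρ
  have hρ0 : 0 ≤ ρ := by positivity
  have hgr := norm_le_gronwallBound_of_norm_deriv_right_le (f := D)
    (f' := fun s => a s q (D s) + R s) (δ := 0) (K := K) (ε := ρ) (a := 0) (b := 1)
    (fun s hs => (hDd s hs).continuousAt.continuousWithinAt)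
    (fun s hs => (hDd s (Ico_subset_Icc_self hs)).hasDerivWithinAt)
    (by simp [D, k, h0])
    (fun s hs => (norm_add_le _ _).trans (add_le_add
      (((a s q).le_opNorm _).trans (by gcongr; exact hab s (Ico_subset_Icc_self hs)))
      (hRb s (Ico_subset_Icc_self hs)))) 1 (by simp)
  rw [gronwallBound_of_K_ne_0 hKpos.ne'] at hgr
  have hD1 : D 1 = h (p + q) 1 - h p 1 - (A p).flip (h p 1) q := by
    simp [D, k]; abel
  rw [← hD1]
  refine hgr.trans ?_
  have hK1 : 1 ≤ K := by simp only [K]; linarith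
  have s1 : ρ / K ≤ ρ := div_le_self hρ0 hK1
  have s2 : 2 * M ^ 2 * ε * X ≤ η / 2 := by
    calc 2 * M ^ 2 * ε * X ≤ 2 * M ^ 2 * (η / (4 * M ^ 2 * X)) * X := by
          gcongr; exact min_le_right _ _
      _ = η / 2 := by field_simp; norm_num
  have s3 : M ^ 3 * ‖q‖ * X ≤ η / 2 := by
    calc M ^ 3 * ‖q‖ * X ≤ M ^ 3 * (η / (2 * M ^ 3 * X)) * X := by gcongr
      _ = η / 2 := by field_simp
  calc (0 * Real.exp (K * (1 - 0)) + ρ / K * (Real.exp (K * (1 - 0)) - 1))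
      ≤ ρ * X := by
        simp only [sub_zero, mul_one, zero_mul, zero_add]
        have : Real.exp K - 1 ≤ X := by simp only [X]; linarith
        have h1 : 0 ≤ Real.exp K - 1 := by linarith [Real.add_one_le_exp K]
        gcongr
    _ = (2 * M ^ 2 * ε * X + M ^ 3 * ‖q‖ * X) * ‖q‖ := by rw [hρ]; ring
    _ ≤ η * ‖q‖ := by gcongr; linarith

theorem main {V E : Type*} [NormedAddCommGroup V] [NormedSpace ℝ V]
    [NormedAddCommGroup E] [NormedSpace ℝ E] [CompleteSpace E]
    (A : V → V →L[ℝ] E →L[ℝ] E) (hA : ContDiff ℝ (⊤ : ℕ∞) A)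
    (hflat : ∀ p u v, fderiv ℝ A p u v - fderiv ℝ A p v u
      = (A p u).comp (A p v) - (A p v).comp (A p u)) (c : E) :
    ∃! f : V → E, ContDiff ℝ (⊤ : ℕ∞) f ∧ f 0 = c ∧ ∀ p, HasFDerivAt f ((A p).flip (f p)) p := by
  have hac : ∀ p : V, Continuous fun s : ℝ => A (s • p) p := fun p =>
    (hA.continuous.comp (by fun_prop : Continuous fun s : ℝ => s • p)).clm_apply continuous_const
  have hex := fun p : V => linear_ode (fun s => A (s • p) p) (hac p) c
  choose h h0 hc hd using hex
  have hf := hasFDerivAt_radial A hA hflat c h h0 hc hd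
  have huniq : ∀ g : V → E, g 0 = c → (∀ p, HasFDerivAt g ((A p).flip (g p)) p) →
      ∀ p, g p = h p 1 := by
    intro g g0 hg p
    have := linear_ode_unique (fun s => A (s • p) p) (hac p) (fun s => g (s • p)) (h p)
      (by simp [g0, h0]) (fun s _ => by
        have e1 : HasDerivAt (fun s : ℝ => s • p) p s := by
          simpa using (hasDerivAt_id s).smul_const p
        exact (hg (s • p)).comp_hasDerivAt s e1) (hd p)
    simpa using this
  refine ⟨fun p => h p 1, ⟨?_, ?_, hf⟩, fun g hg => funext (huniq g hg.2.1 hg.2.2)⟩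
  · have hfd : fderiv ℝ (fun p => h p 1) = fun p => (A p).flip (h p 1) :=
      funext fun p => (hf p).fderiv
    have hdiff : Differentiable ℝ (fun p => h p 1) := fun p => (hf p).differentiableAt
    have hflip : ContDiff ℝ (⊤ : ℕ∞) fun p => (A p).flip :=
by
      let Φ : (V →L[ℝ] E →L[ℝ] E) →L[ℝ] (E →L[ℝ] V →L[ℝ] E) :=
        (ContinuousLinearMap.flipₗᵢ ℝ V E E).toContinuousLinearEquiv
      have hΦ : ContDiff ℝ (⊤ : ℕ∞) Φ := by fun_prop
      exact hΦ.comp hA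
    rw [contDiff_infty]
    intro m
    induction m with
    | zero => exact contDiff_zero.2 hdiff.continuous
    | succ m ih =>
      push_cast
      rw [contDiff_succ_iff_fderiv]
      refine ⟨hdiff, by simp, ?_⟩
      rw [hfd]
      exact (hflip.of_le (by exact_mod_cast le_top)).clm_apply ih
  · have := linear_ode_unique (fun s => A (s • (0:V)) 0) (hac 0) (fun _ => c) (h 0)
      (by simp [h0]) (fun s _ => by simpa using hasDerivAt_const s c) (hd 0)
    exact this.symm

end FlatConn

namespace FlatConn

/-- The result for an arbitrary associative bilinear product `m`. -/
theorem assoc_main {E : Type*} [NormedAddCommGroup E] [NormedSpace ℝ E] [FiniteDimensional ℝ E]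
    (m : E →ₗ[ℝ] E →ₗ[ℝ] E) (hm : ∀ a b c, m (m a b) c = m a (m b c))
    (αt αx : ℝ × ℝ → E)
    (hαt : ContDiff ℝ (⊤ : ℕ∞) αt) (hαx : ContDiff ℝ (⊤ : ℕ∞) αx)
    (hflat : ∀ p : ℝ × ℝ,
      fderiv ℝ αx p (1, 0) - fderiv ℝ αt p (0, 1)
        + (m (αt p) (αx p) - m (αx p) (αt p)) = 0)
    (c : E) :
    ∃! f : ℝ × ℝ → E,
      ContDiff ℝ (⊤ : ℕ∞) f ∧ f (0, 0) = c ∧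
      ∀ p : ℝ × ℝ,
        fderiv ℝ f p (1, 0) + (m (αt p) (f p) - m (f p) (αt p)) = 0 ∧
        fderiv ℝ f p (0, 1) + (m (αx p) (f p) - m (f p) (αx p)) = 0 := by
  have : CompleteSpace E := FiniteDimensional.complete ℝ E
  obtain ⟨L, hL⟩ : ∃ L : E →L[ℝ] E →L[ℝ] E, ∀ a f, L a f = m f a - m a f :=
    ⟨LinearMap.toContinuousLinearMap
      ((LinearMap.toContinuousLinearMap (𝕜 := ℝ) (E := E) (F' := E)).toLinearMap ∘ₗ (m.flip - m)),
      fun a f => by simp⟩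
  let S := ContinuousLinearMap.smulRightL ℝ (ℝ × ℝ) (E →L[ℝ] E)
  let S1 : E →L[ℝ] (ℝ × ℝ) →L[ℝ] E →L[ℝ] E := (S (ContinuousLinearMap.fst ℝ ℝ ℝ)).comp L
  let S2 : E →L[ℝ] (ℝ × ℝ) →L[ℝ] E →L[ℝ] E := (S (ContinuousLinearMap.snd ℝ ℝ ℝ)).comp L
  have hS1 : ∀ a v f, S1 a v f = v.1 • (m f a - m a f) := by intro a v f; simp [S1, S, hL]
  have hS2 : ∀ a v f, S2 a v f = v.2 • (m f a - m a f) := by intro a v f; simp [S2, S, hL]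
  clear_value S1 S2
  let A : ℝ × ℝ → (ℝ × ℝ) →L[ℝ] E →L[ℝ] E := fun p => S1 (αt p) + S2 (αx p)
  have hAapp : ∀ p v f, A p v f
      = v.1 • (m f (αt p) - m (αt p) f) + v.2 • (m f (αx p) - m (αx p) f) := by
    intro p v f
    simp [A, hS1, hS2]
  have hA : ContDiff ℝ (⊤ : ℕ∞) A := by
    have h1 : ContDiff ℝ (⊤ : ℕ∞) S1 := by fun_prop
    have h2 : ContDiff ℝ (⊤ : ℕ∞) S2 := by fun_prop
    exact (h1.comp hαt).add (h2.comp hαx)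
  have hdt := hαt.differentiable (by simp)
  have hdx := hαx.differentiable (by simp)
  have hdec : ∀ (D : (ℝ × ℝ) →L[ℝ] E) (v : ℝ × ℝ),
      D v = v.1 • D (1, 0) + v.2 • D (0, 1) := by
    intro D v
    rw [← map_smul, ← map_smul, ← map_add]; simp
  have hA' : ∀ p u v f, fderiv ℝ A p u v f
      = v.1 • (m f (fderiv ℝ αt p u) - m (fderiv ℝ αt p u) f)
        + v.2 • (m f (fderiv ℝ αx p u) - m (fderiv ℝ αx p u) f) := by
    intro p u v f
    have t1 : HasFDerivAt (fun p => S1 (αt p)) (S1.comp (fderiv ℝ αt p)) p :=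
      HasFDerivAt.comp (g := fun x => S1 x) p (ContinuousLinearMap.hasFDerivAt S1)
        (hdt p).hasFDerivAt
    have t2 : HasFDerivAt (fun p => S2 (αx p)) (S2.comp (fderiv ℝ αx p)) p :=
      HasFDerivAt.comp (g := fun x => S2 x) p (ContinuousLinearMap.hasFDerivAt S2)
        (hdx p).hasFDerivAt
    have : HasFDerivAt A (S1.comp (fderiv ℝ αt p) + S2.comp (fderiv ℝ αx p)) p := by
      have t3 := HasFDerivAt.add (𝕜 := ℝ) (E := ℝ × ℝ) (F := (ℝ × ℝ) →L[ℝ] E →L[ℝ] E)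
        (f := fun p => S1 (αt p)) (g := fun p => S2 (αx p)) t1 t2
      exact t3
    rw [this.fderiv]
    simp [hS1, hS2]
  have hfl : ∀ p u v, fderiv ℝ A p u v - fderiv ℝ A p v u
      = (A p u).comp (A p v) - (A p v).comp (A p u) := by
    intro p u v
    refine ContinuousLinearMap.ext fun f => ?_
    have h1 := hflat p
    have h2 : fderiv ℝ αx p (1, 0)
        = fderiv ℝ αt p (0, 1) - (m (αt p) (αx p) - m (αx p) (αt p)) := by
      rw [← sub_eq_zero, ← h1]; abel
    simp only [sub_apply, ContinuousLinearMap.comp_apply, hA', hAapp]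
    rw [hdec (fderiv ℝ αt p) u, hdec (fderiv ℝ αt p) v, hdec (fderiv ℝ αx p) u,
      hdec (fderiv ℝ αx p) v, h2]
    simp only [map_add, map_sub, map_smul, LinearMap.add_apply, LinearMap.sub_apply,
      LinearMap.smul_apply, hm]
    module
  have key := main A hA hfl c
  have hiff : ∀ f : ℝ × ℝ → E,
      (ContDiff ℝ (⊤ : ℕ∞) f ∧ f 0 = c ∧ ∀ p, HasFDerivAt f ((A p).flip (f p)) p) ↔
      (ContDiff ℝ (⊤ : ℕ∞) f ∧ f (0, 0) = c ∧
      ∀ p : ℝ × ℝ,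
        fderiv ℝ f p (1, 0) + (m (αt p) (f p) - m (f p) (αt p)) = 0 ∧
        fderiv ℝ f p (0, 1) + (m (αx p) (f p) - m (f p) (αx p)) = 0) := by
    intro f
    refine and_congr_right fun hf => and_congr_right fun _ => forall_congr' fun p => ?_
    constructor
    · intro h
      rw [h.fderiv]
      simp [hAapp]
    · rintro ⟨ht, hx⟩
      refine (hf.differentiable (by simp) p).hasFDerivAt.congr_fderiv ?_
      refine ContinuousLinearMap.ext fun v => ?_
      rw [hdec, eq_neg_of_add_eq_zero_left ht, eq_neg_of_add_eq_zero_left hx]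
      simp [hAapp]
  simpa only [hiff] using key

end FlatConn

attribute [local instance] Matrix.normedAddCommGroup Matrix.normedSpace

/-- Given smooth matrix-valued functions `αt, αx` on `ℝ²` satisfying the zero-curvature
(flatness) equation `∂ₜ αx − ∂ₓ αt + [αt, αx] = 0`, for every initial matrix `c` there is a
unique smooth `f` with `f(0,0) = c` that is covariantly constant:
`∂ₜ f + [αt, f] = 0` and `∂ₓ f + [αx, f] = 0` everywhere. -/
theorem flat_connection_covariantly_constant_existence_uniqueness
    (n : ℕ) (hn : 1 ≤ n)
    (αt αx : ℝ × ℝ → Matrix (Fin n) (Fin n) ℝ)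
    (hαt : ContDiff ℝ (⊤ : ℕ∞) αt) (hαx : ContDiff ℝ (⊤ : ℕ∞) αx)
    (hflat : ∀ p : ℝ × ℝ,
      fderiv ℝ αx p (1, 0) - fderiv ℝ αt p (0, 1)
        + (αt p * αx p - αx p * αt p) = 0)
    (c : Matrix (Fin n) (Fin n) ℝ) :
    ∃! f : ℝ × ℝ → Matrix (Fin n) (Fin n) ℝ,
      ContDiff ℝ (⊤ : ℕ∞) f ∧ f (0, 0) = c ∧
      ∀ p : ℝ × ℝ,
        fderiv ℝ f p (1, 0) + (αt p * f p - f p * αt p) = 0 ∧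
        fderiv ℝ f p (0, 1) + (αx p * f p - f p * αx p) = 0 := by
  exact FlatConn.assoc_main (E := Matrix (Fin n) (Fin n) ℝ) (LinearMap.mul ℝ _) mul_assoc αt αx hαt hαx hflat c
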